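/- Fix an integer K ≥ 2 and p ∈ (0,1). For each integer q ≥ 2 define (with log the natural logarithm) C(q) = ( p^K / ( q·log q·(q−1)^K ) ) · [ q·((q−1)/p)^K · ( K·log((q−1)/p) + log q ) − Φ(q) ] − K·H_q(p), where Φ(q) = Σ_{(r_0,…,r_{q−1}) ∈ ℕ^q, Σ_i r_i = K} ( K! / (r_0!···r_{q−1}!) ) · ( Σ_{i=0}^{q−1} ((1−p)(q−1)/p)^{r_i} ) · log( Σ_{i=0}^{q−1} ((1−p)(q−1)/p)^{r_i} ) and H_q(p) = ( p·log(q−1) − p·log p − (1−p)·log(1−p) ) / log q. Then lim_{q→∞} C(q) = 1 − p^K. -/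

import Mathlib

open scoped BigOperators

/-- The q-ary entropy function (natural logarithms). -/
noncomputable def Hq (q : ℕ) (p : ℝ) : ℝ :=
  (p * Real.log ((q : ℝ) - 1) - p * Real.log p - (1 - p) * Real.log (1 - p)) /
    Real.log (q : ℝ)

/-- Φ(q) = Σ_{(r_0,…,r_{q−1}) ∈ ℕ^q, Σ r_i = K} (K!/(r_0!···r_{q−1}!))·
(Σ_i ((1−p)(q−1)/p)^{r_i})·log(Σ_i ((1−p)(q−1)/p)^{r_i}). -/
noncomputable def PhiDMS (q K : ℕ) (p : ℝ) : ℝ :=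
  ∑ r ∈ (Fintype.piFinset fun _ : Fin q => Finset.range (K + 1)).filter
      (fun r => ∑ i, r i = K),
    ((K.factorial : ℝ) / ∏ i, ((r i).factorial : ℝ)) *
      (∑ i, ((1 - p) * ((q : ℝ) - 1) / p) ^ (r i)) *
      Real.log (∑ i, ((1 - p) * ((q : ℝ) - 1) / p) ^ (r i))

/-- The capacity of the K-draw q-ary symmetric channel DMS_{q,K}(p). -/
noncomputable def capDMS (q K : ℕ) (p : ℝ) : ℝ :=
  (p ^ K / ((q : ℝ) * Real.log (q : ℝ) * ((q : ℝ) - 1) ^ K)) *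
      ((q : ℝ) * (((q : ℝ) - 1) / p) ^ K *
          ((K : ℝ) * Real.log (((q : ℝ) - 1) / p) + Real.log (q : ℝ)) -
        PhiDMS q K p) -
    (K : ℝ) * Hq q p

/-- The index set of the sum. -/
def idxR (q K : ℕ) : Finset (Fin q → ℕ) :=
  (Fintype.piFinset fun _ : Fin q => Finset.range (K + 1)).filter (fun r => ∑ i, r i = K)

/-- The multinomial coefficient. -/
noncomputable def mcf {q : ℕ} (K : ℕ) (r : Fin q → ℕ) : ℝ :=
  (K.factorial : ℝ) / ∏ i, ((r i).factorial : ℝ)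

lemma mcf_nonneg {q : ℕ} (K : ℕ) (r : Fin q → ℕ) : 0 ≤ mcf K r := by
  unfold mcf; positivity

lemma idxR_eq (q K : ℕ) : idxR q K = Finset.piAntidiag Finset.univ K := by
  ext r
  simp only [idxR, Finset.mem_filter, Fintype.mem_piFinset, Finset.mem_range,
    Finset.mem_piAntidiag, Finset.mem_univ, implies_true, and_true]
  constructor
  · exact fun h => h.2
  · intro h
    refine ⟨fun i => ?_, h⟩
    have := Finset.single_le_sum (f := r) (fun _ _ => Nat.zero_le _) (Finset.mem_univ i)
    exact Nat.lt_succ_of_le (this.trans h.le)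

lemma idxR_sum {q K : ℕ} {r : Fin q → ℕ} (h : r ∈ idxR q K) : ∑ i, r i = K := by
  simp only [idxR, Finset.mem_filter] at h
  exact h.2

lemma idxR_le {q K : ℕ} {r : Fin q → ℕ} (h : r ∈ idxR q K) (i : Fin q) : r i ≤ K := by
  have h1 := Finset.single_le_sum (f := r) (fun _ _ => Nat.zero_le _) (Finset.mem_univ i)
  have := idxR_sum h
  omega

lemma multi_thm (q K : ℕ) (x : Fin q → ℝ) :
    ∑ r ∈ idxR q K, mcf K r * ∏ i, x i ^ r i = (∑ i, x i) ^ K := by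
  rw [Finset.sum_pow_eq_sum_piAntidiag, ← idxR_eq]
  refine Finset.sum_congr rfl fun r hr => ?_
  congr 1
  have h := Nat.multinomial_spec Finset.univ r
  rw [idxR_sum hr] at h
  unfold mcf
  rw [← h]
  push_cast
  field_simp

lemma prod_one (q : ℕ) (i : Fin q) (a : ℝ) (r : Fin q → ℕ) :
    ∏ l, (Function.update (fun _ => (1 : ℝ)) i a) l ^ r l = a ^ r i := by
  rw [Finset.prod_eq_single i]
  · simp
  · intro b _ hb
    simp [Function.update_of_ne hb]
  · simp

lemma sum_one (q : ℕ) (i : Fin q) (a : ℝ) :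
    ∑ l, (Function.update (fun _ => (1 : ℝ)) i a) l = a + ((q : ℝ) - 1) := by
  rw [Finset.sum_update_of_mem (Finset.mem_univ i)]
  have : 1 ≤ q := by have := i.2; omega
  simp [Finset.card_sdiff, Nat.cast_sub this]

lemma E_one (q K : ℕ) (i : Fin q) (a : ℝ) :
    ∑ r ∈ idxR q K, mcf K r * a ^ r i = (a + ((q : ℝ) - 1)) ^ K := by
  have := multi_thm q K (Function.update (fun _ => (1 : ℝ)) i a)
  simpa only [prod_one, sum_one] using this

lemma E_two (q K : ℕ) (i j : Fin q) (hij : j ≠ i) (a : ℝ) :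
    ∑ r ∈ idxR q K, mcf K r * (a ^ r i * a ^ r j) = (2 * a + ((q : ℝ) - 2)) ^ K := by
  have := multi_thm q K (fun l => Function.update (fun _ => (1 : ℝ)) i a l *
    Function.update (fun _ => (1 : ℝ)) j a l)
  simp only [mul_pow, Finset.prod_mul_distrib, prod_one] at this
  rw [this]
  congr 1
  have h : ∀ l, Function.update (fun _ => (1 : ℝ)) i a l *
    Function.update (fun _ => (1 : ℝ)) j a l = Function.update (fun _ => (1 : ℝ)) i a l +
    Function.update (fun _ => (1 : ℝ)) j a l - 1 := by
    intro l
    by_cases h1 : l = i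
    · subst h1
      simp [Function.update_of_ne hij.symm]
    · simp [Function.update_of_ne h1]
  simp only [h, Finset.sum_sub_distrib, Finset.sum_add_distrib, sum_one]
  simp
  ring

lemma E_zero (q K : ℕ) (i : Fin q) (a : ℝ) :
    ∑ r ∈ idxR q K, mcf K r * (a ^ r i * if r i = 0 then 1 else 0) = ((q : ℝ) - 1) ^ K := by
  have := E_one q K i 0
  rw [zero_add] at this
  rw [← this]
  refine Finset.sum_congr rfl fun r _ => ?_
  by_cases h : r i = 0 <;> simp [h]

lemma E_lin (q K : ℕ) (i : Fin q) (a : ℝ) :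
    ∑ r ∈ idxR q K, mcf K r * (a ^ r i * (r i : ℝ)) =
      K * a * (a + ((q : ℝ) - 1)) ^ (K - 1) := by
  have h1 : HasDerivAt (fun x : ℝ => ∑ r ∈ idxR q K, mcf K r * x ^ r i)
      (∑ r ∈ idxR q K, mcf K r * ((r i : ℝ) * a ^ (r i - 1))) a :=
    HasDerivAt.fun_sum fun r _ => (hasDerivAt_pow (r i) a).const_mul _
  have h2 : HasDerivAt (fun x : ℝ => (x + ((q : ℝ) - 1)) ^ K)
      (K * (a + ((q : ℝ) - 1)) ^ (K - 1) * 1) a :=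
    ((hasDerivAt_id a).add_const _).pow K
  have h3 : (fun x : ℝ => ∑ r ∈ idxR q K, mcf K r * x ^ r i) =
    (fun x : ℝ => (x + ((q : ℝ) - 1)) ^ K) := funext fun x => E_one q K i x
  rw [h3] at h1
  have h4 := h1.unique h2
  have h5 : ∑ r ∈ idxR q K, mcf K r * (a ^ r i * (r i : ℝ)) =
      a * ∑ r ∈ idxR q K, mcf K r * ((r i : ℝ) * a ^ (r i - 1)) := by
    rw [Finset.mul_sum]
    refine Finset.sum_congr rfl fun r _ => ?_
    rcases Nat.eq_zero_or_pos (r i) with h | h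
    · simp [h]
    · obtain ⟨n, hn⟩ := Nat.exists_eq_succ_of_ne_zero h.ne'
      rw [hn]
      simp only [Nat.succ_eq_add_one, Nat.add_sub_cancel]
      ring
  rw [h5, h4]
  ring

/-- The inner sum. -/
noncomputable def TT {q : ℕ} (a : ℝ) (r : Fin q → ℕ) : ℝ := ∑ i, a ^ r i

lemma Phi_eq (q K : ℕ) (p a : ℝ) (ha : a = (1 - p) * ((q : ℝ) - 1) / p) :
    PhiDMS q K p = ∑ i : Fin q, ∑ r ∈ idxR q K, mcf K r * (a ^ r i * Real.log (TT a r)) := by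
  rw [Finset.sum_comm]
  unfold PhiDMS
  rw [← ha]
  refine Finset.sum_congr rfl fun r _ => ?_
  rw [← Finset.mul_sum, ← Finset.sum_mul]
  unfold mcf TT
  ring

lemma TT_ge_card {q : ℕ} {a : ℝ} (ha : 1 ≤ a) (r : Fin q → ℕ) : (q : ℝ) ≤ TT a r := by
  have : ∑ i : Fin q, (1 : ℝ) ≤ TT a r := Finset.sum_le_sum fun i _ => one_le_pow₀ ha
  simpa using this

lemma TT_ge_pow {q : ℕ} {a : ℝ} (ha : 1 ≤ a) (r : Fin q → ℕ) (i : Fin q) :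
    a ^ r i ≤ TT a r :=
  Finset.single_le_sum (f := fun i => a ^ r i) (fun _ _ => by positivity) (Finset.mem_univ i)

lemma log_lower {q : ℕ} (hq : 2 ≤ q) {a : ℝ} (ha : 1 ≤ a) (r : Fin q → ℕ) (i : Fin q) :
    (r i : ℝ) * Real.log a + (if r i = 0 then 1 else 0) * Real.log q ≤ Real.log (TT a r) := by
  by_cases h : r i = 0
  · simp only [h, Nat.cast_zero, zero_mul, if_true, one_mul, zero_add]
    exact Real.log_le_log (by positivity) (TT_ge_card ha r)
  · simp only [h, if_false, zero_mul, add_zero]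
    rw [← Real.log_pow]
    exact Real.log_le_log (by positivity) (TT_ge_pow ha r i)

lemma log_upper {q K : ℕ} (hq : 2 ≤ q) {a b : ℝ} (ha : 1 ≤ a) (hb : 1 ≤ b) (hab : a ≤ b * q)
    (r : Fin q → ℕ) (hr : r ∈ idxR q K) (i : Fin q) :
    Real.log (TT a r) ≤ ((r i : ℝ) + (if r i = 0 then 1 else 0)) * Real.log q + b ^ K +
      (1 / (q : ℝ)) * ∑ l ∈ Finset.univ.erase i, a ^ r l := by
  have hq1 : (1 : ℝ) ≤ q := by exact_mod_cast (by omega : 1 ≤ q)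
  have hq0 : (0 : ℝ) < q := by linarith
  set m : ℕ := r i + (if r i = 0 then 1 else 0) with hm
  have hm1 : 1 ≤ m := by rw [hm]; split_ifs <;> omega
  have hmr : r i ≤ m := by omega
  have hT : 0 < TT a r := lt_of_lt_of_le hq0 (TT_ge_card ha r)
  have hM : (0 : ℝ) < (q : ℝ) ^ m := by positivity
  have h1 : Real.log (TT a r / (q : ℝ) ^ m) ≤ TT a r / (q : ℝ) ^ m - 1 :=
    Real.log_le_sub_one_of_pos (by positivity)
  rw [Real.log_div hT.ne' hM.ne', Real.log_pow] at h1
  have hmc : (m : ℝ) = (r i : ℝ) + (if r i = 0 then 1 else 0) := by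
    rw [hm]; push_cast; rfl
  rw [← hmc]
  have h2 : TT a r = a ^ r i + ∑ l ∈ Finset.univ.erase i, a ^ r l := by
    unfold TT
    exact (Finset.add_sum_erase _ (fun l => a ^ r l) (Finset.mem_univ i)).symm
  have h3 : a ^ r i / (q : ℝ) ^ m ≤ b ^ K := by
    rw [div_le_iff₀ hM]
    calc a ^ r i ≤ (b * q) ^ r i := pow_le_pow_left₀ (by linarith) hab _
      _ = b ^ r i * (q : ℝ) ^ r i := mul_pow _ _ _
      _ ≤ b ^ K * (q : ℝ) ^ m := by
        gcongr
        exact idxR_le hr i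
  have hS : 0 ≤ ∑ l ∈ Finset.univ.erase i, a ^ r l :=
    Finset.sum_nonneg fun _ _ => by positivity
  have h4 : (∑ l ∈ Finset.univ.erase i, a ^ r l) / (q : ℝ) ^ m ≤
      (1 / (q : ℝ)) * ∑ l ∈ Finset.univ.erase i, a ^ r l := by
    rw [one_div, inv_mul_eq_div]
    have : (q : ℝ) ≤ (q : ℝ) ^ m := le_self_pow₀ hq1 (by omega)
    gcongr
  have h5 : TT a r / (q : ℝ) ^ m = a ^ r i / (q : ℝ) ^ m +
    (∑ l ∈ Finset.univ.erase i, a ^ r l) / (q : ℝ) ^ m := by rw [h2, add_div]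
  linarith

lemma Phi_lower {q K : ℕ} (hq : 2 ≤ q) {p a : ℝ} (ha : a = (1 - p) * ((q : ℝ) - 1) / p)
    (ha1 : 1 ≤ a) :
    (q : ℝ) * ((K * a * (a + ((q : ℝ) - 1)) ^ (K - 1)) * Real.log a +
      ((q : ℝ) - 1) ^ K * Real.log q) ≤ PhiDMS q K p := by
  rw [Phi_eq q K p a ha]
  have h : ∀ i : Fin q, (K * a * (a + ((q : ℝ) - 1)) ^ (K - 1)) * Real.log a +
      ((q : ℝ) - 1) ^ K * Real.log q ≤
      ∑ r ∈ idxR q K, mcf K r * (a ^ r i * Real.log (TT a r)) := by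
    intro i
    rw [← E_lin q K i a, ← E_zero q K i a, Finset.sum_mul, Finset.sum_mul,
      ← Finset.sum_add_distrib]
    refine Finset.sum_le_sum fun r _ => ?_
    have h1 := mul_le_mul_of_nonneg_left (log_lower hq ha1 r i)
      (mul_nonneg (mcf_nonneg K r) (by positivity : 0 ≤ a ^ r i))
    refine le_trans (le_of_eq ?_) (h1.trans (le_of_eq ?_)) <;> ring
  have := Finset.sum_le_sum fun i (_ : i ∈ Finset.univ) => h i
  simpa [mul_add] using this

lemma Phi_upper {q K : ℕ} (hq : 2 ≤ q) {p a b : ℝ} (ha : a = (1 - p) * ((q : ℝ) - 1) / p)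
    (ha1 : 1 ≤ a) (hb : 1 ≤ b) (hab : a ≤ b * q) :
    PhiDMS q K p ≤
    (q : ℝ) * ((K * a * (a + ((q : ℝ) - 1)) ^ (K - 1)) * Real.log q +
      ((q : ℝ) - 1) ^ K * Real.log q + (b ^ K + 2 ^ K) * (a + ((q : ℝ) - 1)) ^ K) := by
  have hq2 : (2 : ℝ) ≤ q := by exact_mod_cast hq
  rw [Phi_eq q K p a ha]
  have h : ∀ i : Fin q, ∑ r ∈ idxR q K, mcf K r * (a ^ r i * Real.log (TT a r)) ≤
      (K * a * (a + ((q : ℝ) - 1)) ^ (K - 1)) * Real.log q +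
      ((q : ℝ) - 1) ^ K * Real.log q + (b ^ K + 2 ^ K) * (a + ((q : ℝ) - 1)) ^ K := by
    intro i
    have hA : ∑ r ∈ idxR q K, mcf K r * (a ^ r i * Real.log (TT a r)) ≤
        (∑ r ∈ idxR q K, mcf K r * (a ^ r i * (r i : ℝ))) * Real.log q +
        (∑ r ∈ idxR q K, mcf K r * (a ^ r i * if r i = 0 then 1 else 0)) * Real.log q +
        (∑ r ∈ idxR q K, mcf K r * a ^ r i) * b ^ K +
        (1 / (q : ℝ)) * ∑ r ∈ idxR q K, ∑ l ∈ Finset.univ.erase i,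
          mcf K r * (a ^ r i * a ^ r l) := by
      rw [Finset.sum_mul, Finset.sum_mul, Finset.sum_mul, Finset.mul_sum,
        ← Finset.sum_add_distrib, ← Finset.sum_add_distrib, ← Finset.sum_add_distrib]
      refine Finset.sum_le_sum fun r hr => ?_
      have h1 := mul_le_mul_of_nonneg_left (log_upper hq ha1 hb hab r hr i)
        (mul_nonneg (mcf_nonneg K r) (by positivity : 0 ≤ a ^ r i))
      rw [← Finset.mul_sum, ← Finset.mul_sum]
      refine le_trans (le_of_eq ?_) (h1.trans (le_of_eq ?_)) <;> ring
    rw [E_lin, E_zero, E_one, Finset.sum_comm] at hA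
    have hB : (1 / (q : ℝ)) * ∑ l ∈ Finset.univ.erase i, ∑ r ∈ idxR q K,
          mcf K r * (a ^ r i * a ^ r l) ≤ 2 ^ K * (a + ((q : ℝ) - 1)) ^ K := by
      have h2 : ∑ l ∈ Finset.univ.erase i, ∑ r ∈ idxR q K,
          mcf K r * (a ^ r i * a ^ r l) ≤
          ∑ l ∈ Finset.univ.erase i, 2 ^ K * (a + ((q : ℝ) - 1)) ^ K := by
        refine Finset.sum_le_sum fun l hl => ?_
        rw [E_two q K i l (Finset.ne_of_mem_erase hl), ← mul_pow]
        exact pow_le_pow_left₀ (by linarith) (by linarith) _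
      have h3 : ∑ l ∈ Finset.univ.erase i, (2 : ℝ) ^ K * (a + ((q : ℝ) - 1)) ^ K ≤
          ∑ l : Fin q, (2 : ℝ) ^ K * (a + ((q : ℝ) - 1)) ^ K :=
        Finset.sum_le_sum_of_subset_of_nonneg (Finset.erase_subset _ _)
          fun _ _ _ => mul_nonneg (by positivity) (pow_nonneg (by linarith) _)
      rw [Finset.sum_const (s := Finset.univ), Finset.card_univ, Fintype.card_fin,
        nsmul_eq_mul] at h3
      rw [one_div, inv_mul_le_iff₀ (by linarith)]
      exact h2.trans h3
    linarith
  have := Finset.sum_le_sum fun i (_ : i ∈ Finset.univ) => h i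
  simpa [mul_add] using this

lemma cap_bounds {q K : ℕ} (hK : 2 ≤ K) (hq : 2 ≤ q) {p a : ℝ} (hp0 : 0 < p) (hp1 : p < 1)
    (ha : a = (1 - p) * ((q : ℝ) - 1) / p) (ha1 : 1 ≤ a) :
    capDMS q K p ≤ 1 - p ^ K ∧
    1 - p ^ K - (K * (1 - p) * Real.log 2 + K * (1 - p) * |Real.log (1 - p) - Real.log p|
      + ((1 / p) ^ K + 2 ^ K)) / Real.log q ≤ capDMS q K p := by
  have hq2 : (2 : ℝ) ≤ q := by exact_mod_cast hq
  have hL : 0 < Real.log q := Real.log_pos (by linarith)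
  have hq1 : (0 : ℝ) < (q : ℝ) - 1 := by linarith
  have hs : a + ((q : ℝ) - 1) = ((q : ℝ) - 1) / p := by
    rw [ha]; field_simp; ring
  have hsK : (K : ℝ) * a * (((q : ℝ) - 1) / p) ^ (K - 1) =
      K * (1 - p) * (((q : ℝ) - 1) / p) ^ K := by
    obtain ⟨n, rfl⟩ : ∃ n, K = n + 1 := ⟨K - 1, by omega⟩
    rw [Nat.add_sub_cancel, pow_succ, ha]; ring
  have hz : ((q : ℝ) - 1) ^ K = p ^ K * (((q : ℝ) - 1) / p) ^ K := by
    rw [← mul_pow]; congr 1; field_simp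
  have hlo := Phi_lower (K := K) hq ha ha1
  have hhi := Phi_upper (K := K) hq ha ha1 (b := 1 / p) (by rw [le_div_iff₀ hp0]; linarith)
    (by rw [ha, one_div, inv_mul_eq_div]; gcongr; nlinarith)
  rw [hs, hsK, hz] at hlo hhi
  set S := (((q : ℝ) - 1) / p) ^ K with hS
  have hSpos : 0 < S := by positivity
  have hqS : 0 < (q : ℝ) * S := by positivity
  have hla : Real.log a = Real.log (1 - p) + Real.log ((q : ℝ) - 1) - Real.log p := by
    rw [ha, Real.log_div (mul_pos (by linarith) hq1).ne' hp0.ne',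
      Real.log_mul (by linarith) hq1.ne']
  have hcap : capDMS q K p * Real.log q = K * (Real.log ((q : ℝ) - 1) - Real.log p)
      + Real.log q - PhiDMS q K p / (q * S)
      - K * (p * Real.log ((q : ℝ) - 1) - p * Real.log p - (1 - p) * Real.log (1 - p)) := by
    unfold capDMS Hq
    rw [hz, ← hS, Real.log_div hq1.ne' hp0.ne']
    field_simp
  have hlo' : K * (1 - p) * Real.log a + p ^ K * Real.log q ≤ PhiDMS q K p / (q * S) := by
    rw [le_div_iff₀ hqS]
    refine le_trans (le_of_eq ?_) hlo
    ring
  have hhi' : PhiDMS q K p / (q * S) ≤ K * (1 - p) * Real.log q + p ^ K * Real.log q +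
      ((1 / p) ^ K + 2 ^ K) := by
    rw [div_le_iff₀ hqS]
    refine le_trans hhi (le_of_eq ?_)
    ring
  have hl2 : Real.log q - Real.log 2 ≤ Real.log ((q : ℝ) - 1) := by
    rw [← Real.log_div (by linarith) (by norm_num)]
    exact Real.log_le_log (by linarith) (by linarith)
  have hKp : 0 ≤ (K : ℝ) * (1 - p) := mul_nonneg (by positivity) (by linarith)
  constructor
  · refine le_of_mul_le_mul_right ?_ hL
    rw [hcap]
    rw [hla] at hlo'
    linarith
  · refine le_of_mul_le_mul_right ?_ hL
    rw [hcap, sub_mul, div_mul_cancel₀ _ hL.ne']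
    have e1 := mul_le_mul_of_nonneg_left hl2 hKp
    have e2 := mul_le_mul_of_nonneg_left (neg_abs_le (Real.log (1 - p) - Real.log p)) hKp
    linarith

/-- For fixed K ≥ 2 and p ∈ (0,1), the capacity of DMS_{q,K}(p) tends to 1 − p^K
as the alphabet size q → ∞ over the integers. -/
theorem stmt3 (K : ℕ) (hK : 2 ≤ K) (p : ℝ) (hp : p ∈ Set.Ioo (0 : ℝ) 1) :
    Filter.Tendsto (fun q : ℕ => capDMS q K p) Filter.atTop (nhds (1 - p ^ K)) := by
  obtain ⟨hp0, hp1⟩ := hp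
  have hc : 0 < (1 - p) / p := div_pos (by linarith) hp0
  have hlarge : ∀ᶠ q : ℕ in Filter.atTop, 2 ≤ q ∧ 1 ≤ (1 - p) * ((q : ℝ) - 1) / p := by
    filter_upwards [Filter.eventually_ge_atTop 2,
      (tendsto_natCast_atTop_atTop (R := ℝ)).eventually_ge_atTop (1 + p / (1 - p))] with q h1 h2
    refine ⟨h1, ?_⟩
    have h3 : p / (1 - p) ≤ (q : ℝ) - 1 := by linarith
    rw [div_le_iff₀ (by linarith)] at h3
    rw [le_div_iff₀ hp0]
    linarith
  have hlog : Filter.Tendsto (fun q : ℕ => Real.log (q : ℝ)) Filter.atTop Filter.atTop :=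
    Real.tendsto_log_atTop.comp tendsto_natCast_atTop_atTop
  have hlow : Filter.Tendsto (fun q : ℕ => 1 - p ^ K - (K * (1 - p) * Real.log 2 +
      K * (1 - p) * |Real.log (1 - p) - Real.log p|
      + ((1 / p) ^ K + 2 ^ K)) / Real.log q) Filter.atTop (nhds (1 - p ^ K)) := by
    simpa using (hlog.const_div_atTop (K * (1 - p) * Real.log 2 +
      K * (1 - p) * |Real.log (1 - p) - Real.log p|
      + ((1 / p) ^ K + 2 ^ K))).const_sub (1 - p ^ K)
  refine tendsto_of_tendsto_of_tendsto_of_le_of_le' hlow tendsto_const_nhds ?_ ?_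
  · filter_upwards [hlarge] with q h
    exact (cap_bounds hK h.1 hp0 hp1 rfl h.2).2
  · filter_upwards [hlarge] with q h
    exact (cap_bounds hK h.1 hp0 hp1 rfl h.2).1
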